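/- arXiv:2402.18290 — 2 statements merged into one kernel-verified Lean document; each statement's English description precedes it below -/
import Mathlib

section
/- For h = 4, the boundary map ∂ is surjective onto the automorphisms of the boundary forms: for every group automorphism φ of ℤ⁴/A₄ℤ⁴ satisfying ∂λ(φ(ξ),φ(η)) = ∂λ(ξ,η) and ∂θ(φ(ξ)) = ∂θ(ξ) for all ξ, η, there exists P ∈ GL₄(ℤ) with P^T A₄ P = A₄ such that φ([x]) = [(P^T)^{-1} x] for all x ∈ ℤ⁴. Equivalently, the boundary automorphism set bAut(ℤ⁴, [Q₄]) is trivial. -/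
open Matrix

noncomputable section

/-- The matrix `Q_h`: first row all `4`; in rows `2,…,h` diagonal and
above-diagonal entries are `2`, below-diagonal entries are `0`. -/
def Qmat (h : ℕ) : Matrix (Fin h) (Fin h) ℤ :=
  Matrix.of fun i j => if (i : ℕ) = 0 then 4 else if i ≤ j then 2 else 0

/-- `A_h = Q_h + Q_hᵀ`. -/
def Amat (h : ℕ) : Matrix (Fin h) (Fin h) ℤ := Qmat h + (Qmat h)ᵀ

/-- `A_h` viewed as a rational matrix. -/
def AmatQ (h : ℕ) : Matrix (Fin h) (Fin h) ℚ := (Amat h).map (Int.cast)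

/-- `Q_h` viewed as a rational matrix. -/
def QmatQ (h : ℕ) : Matrix (Fin h) (Fin h) ℚ := (Qmat h).map (Int.cast)

/-- The cokernel `ℤ^h / A_h ℤ^h`. -/
abbrev Coker (h : ℕ) := (Fin h → ℤ) ⧸ LinearMap.range ((Amat h).mulVecLin)

/-- The quotient map `ℤ^h → ℤ^h / A_h ℤ^h`. -/
def ckMk {h : ℕ} (x : Fin h → ℤ) : Coker h := Submodule.Quotient.mk x

def ratVec {h : ℕ} (x : Fin h → ℤ) : Fin h → ℚ := fun i => (x i : ℚ)

/-- The boundary linking form `∂λ` computed on representatives: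
`x ᵀ A_h⁻¹ y mod ℤ`, valued in `ℚ/ℤ`. -/
def linkR (h : ℕ) (x y : Fin h → ℤ) : AddCircle (1 : ℚ) :=
  ((ratVec x ⬝ᵥ ((AmatQ h)⁻¹ *ᵥ ratVec y) : ℚ) : AddCircle (1 : ℚ))

/-- The boundary quadratic form `∂θ` computed on representatives:
`xᵀ A_h⁻¹ Q_h A_h⁻¹ x mod ℤ`, valued in `ℚ/ℤ`. -/
def quadR (h : ℕ) (x : Fin h → ℤ) : AddCircle (1 : ℚ) :=
  ((ratVec x ⬝ᵥ (((AmatQ h)⁻¹ * QmatQ h * (AmatQ h)⁻¹) *ᵥ ratVec x) : ℚ) : AddCircle (1 : ℚ))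

/-! The matrix `4 A₄⁻¹` is the Gram matrix of the simple roots of the lattice `D₄ ⊆ ℤ⁴`, so `∂λ`
and `∂θ` read off inner products modulo `4` and squared norms modulo `8` of vectors of `D₄`, and
the cokernel is `D₄ / 4D₄*`. Since `4D₄* = 4ℤ⁴ ∪ ((2,2,2,2) + 4ℤ⁴)` has squared covering radius
`8`, every class has a representative of squared norm at most `8`; if `∂θ` agrees with that of a
root, this representative is itself a root. An automorphism of the boundary forms therefore lifts
the simple roots to roots whose inner products are correct modulo `4`. By Cauchy–Schwarz these lie
in `[-2, 2]`, where the residues of `0` and `-1` have no other representative, so the Gram matrix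
is unchanged and the matrix `R` with these columns gives the isometry `P = (R⁻¹)ᵀ`. -/

section Isometry

variable {ι K : Type*} [Fintype ι] [DecidableEq ι] [CommRing K] {G R : Matrix ι ι K}

theorem isUnit_det_of_transpose_mul_mul_eq (hG : IsLeftRegular G.det) (hR : Rᵀ * G * R = G) :
    IsUnit R.det := by
  refine IsUnit.of_mul_eq_one R.det (hG ?_)
  calc G.det * (R.det * R.det) = (Rᵀ * G * R).det := by
        rw [det_mul, det_mul, det_transpose]; ring
    _ = G.det * 1 := by rw [hR, mul_one]

theorem inv_mul_mul_inv_transpose_eq_of_mul_eq_smul_one {A : Matrix ι ι K} {c : K}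
    (hG : IsLeftRegular G.det) (hAG : A * G = c • 1) (hR : Rᵀ * G * R = G) :
    R⁻¹ * A * R⁻¹ᵀ = A := by
  have hdet : IsUnit R.det := isUnit_det_of_transpose_mul_mul_eq hG hR
  apply (isRegular_of_isLeftRegular_det hG).right
  calc R⁻¹ * A * R⁻¹ᵀ * G = R⁻¹ * A * (Rᵀ⁻¹ * (Rᵀ * (G * R))) := by
        rw [transpose_nonsing_inv, ← Matrix.mul_assoc Rᵀ, hR, Matrix.mul_assoc]
    _ = R⁻¹ * (A * G) * R := by
        rw [nonsing_inv_mul_cancel_left _ _ (isUnit_det_transpose _ hdet)]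
        simp only [Matrix.mul_assoc]
    _ = A * G := by
        rw [hAG, Matrix.mul_smul, Matrix.smul_mul, Matrix.mul_one, nonsing_inv_mul _ hdet]

theorem two_mul_dotProduct_inv_mul_mul_inv_mulVec {A Q : Matrix ι ι K} (hA : A = Q + Qᵀ)
    (hdet : IsUnit A.det) (x : ι → K) :
    2 * (x ⬝ᵥ (A⁻¹ * Q * A⁻¹) *ᵥ x) = x ⬝ᵥ A⁻¹ *ᵥ x := by
  have hAT : A⁻¹ᵀ = A⁻¹ := by
    rw [transpose_nonsing_inv, hA, transpose_add, transpose_transpose, add_comm]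
  have hT : x ⬝ᵥ (A⁻¹ * Qᵀ * A⁻¹) *ᵥ x = x ⬝ᵥ (A⁻¹ * Q * A⁻¹) *ᵥ x := by
    rw [← dotProduct_transpose_mulVec, transpose_mul, transpose_mul, transpose_transpose, hAT,
      Matrix.mul_assoc]
  calc 2 * (x ⬝ᵥ (A⁻¹ * Q * A⁻¹) *ᵥ x)
      = x ⬝ᵥ (A⁻¹ * Q * A⁻¹) *ᵥ x + x ⬝ᵥ (A⁻¹ * Qᵀ * A⁻¹) *ᵥ x := by rw [hT, two_mul]
    _ = x ⬝ᵥ (A⁻¹ * A * A⁻¹) *ᵥ x := by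
        rw [← dotProduct_add, ← add_mulVec, ← Matrix.add_mul, ← Matrix.mul_add, ← hA]
    _ = x ⬝ᵥ A⁻¹ *ᵥ x := by rw [nonsing_inv_mul _ hdet, Matrix.one_mul]

end Isometry

section Vectors

variable {ι : Type*} [Fintype ι]

theorem abs_dotProduct_le_of_dotProduct_self_le {R : Type*} [CommRing R] [LinearOrder R]
    [IsStrictOrderedRing R] {v w : ι → R} {c : R} (hv : v ⬝ᵥ v ≤ c) (hw : w ⬝ᵥ w ≤ c) :
    |v ⬝ᵥ w| ≤ c := by
  have hw₀ : 0 ≤ w ⬝ᵥ w := Finset.sum_nonneg fun i _ => mul_self_nonneg (w i)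
  have hv₀ : 0 ≤ v ⬝ᵥ v := Finset.sum_nonneg fun i _ => mul_self_nonneg (v i)
  have hc : 0 ≤ c := hv₀.trans hv
  refine abs_le_of_sq_le_sq ?_ hc
  calc (v ⬝ᵥ w) ^ 2 ≤ (v ⬝ᵥ v) * (w ⬝ᵥ w) := by
        simpa only [dotProduct, sq] using Finset.sum_mul_sq_le_sq_mul_sq Finset.univ v w
    _ ≤ c ^ 2 := by rw [sq]; exact mul_le_mul hv hw hw₀ hc

theorem exists_sq_sub_four_mul_add_sq_le (a : ℤ) :
    ∃ m m' : ℤ, (a - 4 * m) ^ 2 + (a - 4 * m' - 2) ^ 2 ≤ 4 := by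
  obtain ⟨q, t, ht, rfl⟩ : ∃ q t : ℤ, (t = 0 ∨ t = 1 ∨ t = 2 ∨ t = 3) ∧ a = 4 * q + t :=
    ⟨a / 4, a % 4, by lia, by lia⟩
  rcases ht with rfl | rfl | rfl | rfl
  · exact ⟨q, q, by linarith⟩
  · exact ⟨q, q, by linarith⟩
  · exact ⟨q, q, by linarith⟩
  · exact ⟨q + 1, q, by linarith⟩

theorem exists_dotProduct_self_sub_four_smul_le (v : ι → ℤ) :
    ∃ m : ι → ℤ, (v - 4 • m) ⬝ᵥ (v - 4 • m) ≤ 2 * (Fintype.card ι : ℤ) ∨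
      (v - 4 • m - 2) ⬝ᵥ (v - 4 • m - 2) ≤ 2 * (Fintype.card ι : ℤ) := by
  choose m m' hm using fun i => exists_sq_sub_four_mul_add_sq_le (v i)
  have hsum : (v - 4 • m) ⬝ᵥ (v - 4 • m) + (v - 4 • m' - 2) ⬝ᵥ (v - 4 • m' - 2) ≤
      2 * (Fintype.card ι : ℤ) + 2 * (Fintype.card ι : ℤ) :=
    calc _ = ∑ i, ((v i - 4 * m i) ^ 2 + (v i - 4 * m' i - 2) ^ 2) := by
          rw [Finset.sum_add_distrib]
          simp only [dotProduct, sq]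
          rfl
      _ ≤ ∑ _i : ι, 4 := Finset.sum_le_sum fun i _ => hm i
      _ = 2 * (Fintype.card ι : ℤ) + 2 * (Fintype.card ι : ℤ) := by
          simp only [Finset.sum_const, Finset.card_univ, nsmul_eq_mul]; ring
  by_cases h : (v - 4 • m) ⬝ᵥ (v - 4 • m) ≤ 2 * (Fintype.card ι : ℤ)
  · exact ⟨m, .inl h⟩
  · exact ⟨m', .inr (by lia)⟩

end Vectors

section BoundaryForms

theorem coe_div_eq_coe_div_iff_modEq {n : ℤ} (hn : n ≠ 0) (a b : ℤ) :
    ((a / n : ℚ) : AddCircle (1 : ℚ)) = (b / n : ℚ) ↔ a ≡ b [ZMOD n] := by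
  rw [← AddCommGroup.modEq_iff_eq_mod_zmultiples,
    AddCommGroup.div_modEq_div (Int.cast_ne_zero.2 hn), one_mul,
    AddCommGroup.intCast_modEq_intCast, AddCommGroup.modEq_iff_intModEq]

variable {h : ℕ}

theorem ckMk_eq_ckMk_iff {x y : Fin h → ℤ} : ckMk x = ckMk y ↔ ∃ z, Amat h *ᵥ z = x - y :=
  Submodule.Quotient.eq _

theorem map_ckMk_eq_ckMk_mulVec {φ : Coker h →+ Coker h} {R : Matrix (Fin h) (Fin h) ℤ}
    (hR : ∀ i, φ (ckMk (Pi.single i 1)) = ckMk (R.col i)) (x : Fin h → ℤ) :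
    φ (ckMk x) = ckMk (R *ᵥ x) := by
  let π := Submodule.mkQ (LinearMap.range (Amat h).mulVecLin)
  have hcomp : φ.toIntLinearMap ∘ₗ π = π ∘ₗ R.mulVecLin := by
    refine LinearMap.pi_ext' fun i => LinearMap.ext_ring ?_
    change φ (ckMk (Pi.single i 1)) = ckMk (R *ᵥ Pi.single i 1)
    rw [hR, mulVec_single_one]
  exact LinearMap.congr_fun hcomp x

variable {G : Matrix (Fin h) (Fin h) ℤ} {n : ℤ}

theorem det_ne_zero_of_Amat_mul_eq_smul_one (hn : n ≠ 0) (hAG : Amat h * G = n • 1) :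
    G.det ≠ 0 := by
  have hdet : (Amat h).det * G.det = n ^ h := by
    rw [← det_mul, hAG, det_smul, det_one, mul_one, Fintype.card_fin]
  exact right_ne_zero_of_mul (hdet ▸ pow_ne_zero h hn)

theorem AmatQ_mul_smul_map_eq_one (hn : n ≠ 0) (hAG : Amat h * G = n • 1) :
    AmatQ h * ((n : ℚ)⁻¹ • G.map Int.cast) = 1 := by
  have hn' : (n : ℚ) ≠ 0 := Int.cast_ne_zero.2 hn
  have hmap : AmatQ h * G.map Int.cast = (n : ℚ) • 1 := by
    calc AmatQ h * G.map Int.cast = (Amat h * G).map Int.cast :=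
          (Matrix.map_mul (f := Int.castRingHom ℚ)).symm
      _ = (n : ℚ) • 1 := by
          rw [hAG, smul_one_eq_diagonal, smul_one_eq_diagonal, diagonal_map Int.cast_zero]
  rw [Matrix.mul_smul, hmap, smul_smul, inv_mul_cancel₀ hn', one_smul]

theorem AmatQ_eq_add_transpose : AmatQ h = QmatQ h + (QmatQ h)ᵀ := by
  ext i j
  simp [AmatQ, QmatQ, Amat]

theorem dotProduct_AmatQ_inv_mulVec (hn : n ≠ 0) (hAG : Amat h * G = n • 1) (x y : Fin h → ℤ) :
    ratVec x ⬝ᵥ (AmatQ h)⁻¹ *ᵥ ratVec y = (x ⬝ᵥ G *ᵥ y : ℤ) / n := by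
  have hcast : ratVec x ⬝ᵥ G.map Int.cast *ᵥ ratVec y = (x ⬝ᵥ G *ᵥ y : ℤ) := by
    simp [ratVec, dotProduct, mulVec]
  rw [inv_eq_right_inv (AmatQ_mul_smul_map_eq_one hn hAG), smul_mulVec, dotProduct_smul, hcast,
    smul_eq_mul, inv_mul_eq_div]

theorem linkR_eq_linkR_iff (hn : n ≠ 0) (hAG : Amat h * G = n • 1) {x y x' y' : Fin h → ℤ} :
    linkR h x y = linkR h x' y' ↔ x ⬝ᵥ G *ᵥ y ≡ x' ⬝ᵥ G *ᵥ y' [ZMOD n] := by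
  rw [linkR, linkR, dotProduct_AmatQ_inv_mulVec hn hAG, dotProduct_AmatQ_inv_mulVec hn hAG,
    coe_div_eq_coe_div_iff_modEq hn]

theorem quadR_eq_coe_div (hn : n ≠ 0) (hAG : Amat h * G = n • 1) (x : Fin h → ℤ) :
    quadR h x = (((x ⬝ᵥ G *ᵥ x : ℤ) / (2 * n : ℤ) : ℚ) : AddCircle (1 : ℚ)) := by
  have hdet : IsUnit (AmatQ h).det :=
    isUnit_det_of_right_inverse (AmatQ_mul_smul_map_eq_one hn hAG)
  have htwo := two_mul_dotProduct_inv_mul_mul_inv_mulVec AmatQ_eq_add_transpose hdet (ratVec x)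
  rw [dotProduct_AmatQ_inv_mulVec hn hAG] at htwo
  rw [quadR, Int.cast_mul, Int.cast_ofNat, mul_comm (2 : ℚ), ← div_div, ← htwo,
    mul_div_cancel_left₀ _ two_ne_zero]

theorem quadR_eq_quadR_iff (hn : n ≠ 0) (hAG : Amat h * G = n • 1) {x y : Fin h → ℤ} :
    quadR h x = quadR h y ↔ x ⬝ᵥ G *ᵥ x ≡ y ⬝ᵥ G *ᵥ y [ZMOD 2 * n] := by
  rw [quadR_eq_coe_div hn hAG, quadR_eq_coe_div hn hAG,
    coe_div_eq_coe_div_iff_modEq (mul_ne_zero two_ne_zero hn)]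

theorem exists_isometry_of_gram_eq (hn : n ≠ 0) (hAG : Amat h * G = n • 1)
    {φ : Coker h →+ Coker h} {u : Fin h → Fin h → ℤ}
    (hu : ∀ i, ckMk (u i) = φ (ckMk (Pi.single i 1)))
    (hgram : ∀ i j, u i ⬝ᵥ G *ᵥ u j = G i j) :
    ∃ P : Matrix (Fin h) (Fin h) ℤ, IsUnit P.det ∧ Pᵀ * Amat h * P = Amat h ∧
      ∀ x : Fin h → ℤ, φ (ckMk x) = ckMk ((Pᵀ)⁻¹ *ᵥ x) := by
  let R : Matrix (Fin h) (Fin h) ℤ := (Matrix.of u)ᵀ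
  have hR : Rᵀ * G * R = G := by
    ext i j
    rw [← hgram, Matrix.mul_assoc]
    rfl
  have hG : IsLeftRegular G.det :=
    (IsRegular.of_ne_zero (det_ne_zero_of_Amat_mul_eq_smul_one hn hAG)).left
  have hdet : IsUnit R.det := isUnit_det_of_transpose_mul_mul_eq hG hR
  refine ⟨R⁻¹ᵀ, ?_, ?_, fun x => ?_⟩
  · rw [det_transpose]
    exact isUnit_nonsing_inv_det _ hdet
  · rw [transpose_transpose]
    exact inv_mul_mul_inv_transpose_eq_of_mul_eq_smul_one hG hAG hR
  · rw [transpose_transpose, nonsing_inv_nonsing_inv _ hdet]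
    exact map_ckMk_eq_ckMk_mulVec (fun i => (hu i).symm) x

end BoundaryForms

section RootLatticeD4

/-- The simple roots of `D₄` as columns, in the orthonormal coordinates of `ℤ⁴`. The central node
of the Dynkin diagram comes first. -/
def simpleRootsD4 : Matrix (Fin 4) (Fin 4) ℤ :=
  !![0, 1, 0, 0; 1, -1, 0, 0; -1, 0, 1, 1; 0, 0, -1, 1]

/-- The Cartan matrix of type `D₄`, as the Gram matrix of `simpleRootsD4`; its first index is the
central node, unlike in `CartanMatrix.D`. -/
def gramD4 : Matrix (Fin 4) (Fin 4) ℤ := simpleRootsD4ᵀ * simpleRootsD4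

theorem gramD4_eq : gramD4 = !![2, -1, -1, -1; -1, 2, 0, 0; -1, 0, 2, 0; -1, 0, 0, 2] := by
  decide

theorem Amat_four_mul_gramD4 : Amat 4 * gramD4 = (4 : ℤ) • 1 := by
  decide

theorem gramD4_apply_self (i : Fin 4) : gramD4 i i = 2 := by
  rw [gramD4_eq]
  fin_cases i <;> rfl

theorem gramD4_apply_of_ne {i j : Fin 4} (hij : i ≠ j) : gramD4 i j = 0 ∨ gramD4 i j = -1 := by
  rw [gramD4_eq]
  fin_cases i <;> fin_cases j <;> simp at hij ⊢

theorem single_dotProduct_gramD4_mulVec_single (i j : Fin 4) :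
    Pi.single i 1 ⬝ᵥ gramD4 *ᵥ Pi.single j 1 = gramD4 i j := by
  rw [mulVec_single_one, single_one_dotProduct, col_apply]

theorem dotProduct_gramD4_mulVec (x y : Fin 4 → ℤ) :
    x ⬝ᵥ gramD4 *ᵥ y = simpleRootsD4 *ᵥ x ⬝ᵥ simpleRootsD4 *ᵥ y := by
  rw [gramD4, ← mulVec_mulVec, dotProduct_transpose_mulVec, dotProduct_comm]

-- `simpleRootsD4` carries `A₄ℤ⁴` onto `4D₄*`, which is generated by `4ℤ⁴` and `(2, 2, 2, 2)`.
theorem simpleRootsD4_mulVec_Amat_mulVec_transpose (m : Fin 4 → ℤ) :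
    simpleRootsD4 *ᵥ Amat 4 *ᵥ simpleRootsD4ᵀ *ᵥ m = 4 • m := by
  have hmul : simpleRootsD4 * Amat 4 * simpleRootsD4ᵀ = (4 : ℤ) • 1 := by decide
  rw [mulVec_mulVec, mulVec_mulVec, hmul, smul_mulVec, one_mulVec]
  rfl

theorem simpleRootsD4_mulVec_Amat_mulVec_single :
    simpleRootsD4 *ᵥ Amat 4 *ᵥ Pi.single 3 1 = 2 := by
  decide

theorem exists_ckMk_eq_and_gramD4_le (c : Coker 4) :
    ∃ u : Fin 4 → ℤ, ckMk u = c ∧ u ⬝ᵥ gramD4 *ᵥ u ≤ 8 := by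
  obtain ⟨x, rfl⟩ : ∃ x, ckMk x = c := Submodule.Quotient.mk_surjective _ c
  have hsub (z : Fin 4 → ℤ) : ckMk (x - Amat 4 *ᵥ z) = ckMk x :=
    ckMk_eq_ckMk_iff.2 ⟨-z, by rw [mulVec_neg]; abel⟩
  obtain ⟨m, hm | hm⟩ := exists_dotProduct_self_sub_four_smul_le (simpleRootsD4 *ᵥ x)
  · refine ⟨x - Amat 4 *ᵥ simpleRootsD4ᵀ *ᵥ m, hsub _, ?_⟩
    rwa [dotProduct_gramD4_mulVec, mulVec_sub, simpleRootsD4_mulVec_Amat_mulVec_transpose]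
  · refine ⟨x - Amat 4 *ᵥ (simpleRootsD4ᵀ *ᵥ m + Pi.single 3 1), hsub _, ?_⟩
    rwa [dotProduct_gramD4_mulVec, mulVec_sub, mulVec_add, mulVec_add,
      simpleRootsD4_mulVec_Amat_mulVec_transpose, simpleRootsD4_mulVec_Amat_mulVec_single,
      ← sub_sub]

theorem gramD4_self_eq_two_of_modEq {u : Fin 4 → ℤ} (hle : u ⬝ᵥ gramD4 *ᵥ u ≤ 8)
    (hmod : u ⬝ᵥ gramD4 *ᵥ u ≡ 2 [ZMOD 8]) : u ⬝ᵥ gramD4 *ᵥ u = 2 := by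
  have hnonneg : 0 ≤ u ⬝ᵥ gramD4 *ᵥ u := by
    rw [dotProduct_gramD4_mulVec]
    exact Finset.sum_nonneg fun i _ => mul_self_nonneg _
  rw [Int.ModEq] at hmod
  lia

theorem gramD4_eq_of_modEq {u : Fin 4 → Fin 4 → ℤ} (hroot : ∀ i, u i ⬝ᵥ gramD4 *ᵥ u i = 2)
    (hmod : ∀ i j, u i ⬝ᵥ gramD4 *ᵥ u j ≡ gramD4 i j [ZMOD 4]) (i j : Fin 4) :
    u i ⬝ᵥ gramD4 *ᵥ u j = gramD4 i j := by
  obtain rfl | hij := eq_or_ne i j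
  · rw [hroot, gramD4_apply_self]
  · have habs : |u i ⬝ᵥ gramD4 *ᵥ u j| ≤ 2 := by
      simp only [dotProduct_gramD4_mulVec] at hroot ⊢
      exact abs_dotProduct_le_of_dotProduct_self_le (hroot i).le (hroot j).le
    have hij_mod := hmod i j
    rw [Int.ModEq] at hij_mod
    obtain ⟨hlower, hupper⟩ := abs_le.1 habs
    rcases gramD4_apply_of_ne hij with hG | hG <;> lia

end RootLatticeD4

/-- For h = 4, every group automorphism of ℤ^4/A_4 ℤ^4 preserving the boundary linking
form ∂λ and the boundary quadratic form ∂θ is induced, via [x] ↦ [(Pᵀ)⁻¹ x], by an isometry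
P ∈ GL_4(ℤ) of A_4; i.e. the boundary map ∂ is surjective and bAut(ℤ^4, [Q_4]) is
trivial. -/
theorem boundary_map_surjective_h4 (φ : Coker 4 ≃+ Coker 4)
    (hlink : ∀ x y x' y' : Fin 4 → ℤ, ckMk x' = φ (ckMk x) → ckMk y' = φ (ckMk y) →
      linkR 4 x' y' = linkR 4 x y)
    (hquad : ∀ x x' : Fin 4 → ℤ, ckMk x' = φ (ckMk x) → quadR 4 x' = quadR 4 x) :
    ∃ P : Matrix (Fin 4) (Fin 4) ℤ, IsUnit P.det ∧ Pᵀ * Amat 4 * P = Amat 4 ∧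
      ∀ x : Fin 4 → ℤ, φ (ckMk x) = ckMk ((Pᵀ)⁻¹ *ᵥ x) := by
  have hn : (4 : ℤ) ≠ 0 := by decide
  choose u hu hle using fun i => exists_ckMk_eq_and_gramD4_le (φ (ckMk (Pi.single i 1)))
  have hroot (i) : u i ⬝ᵥ gramD4 *ᵥ u i = 2 := by
    have hmod := (quadR_eq_quadR_iff hn Amat_four_mul_gramD4).1 (hquad _ _ (hu i))
    rw [single_dotProduct_gramD4_mulVec_single, gramD4_apply_self] at hmod
    exact gramD4_self_eq_two_of_modEq (hle i) hmod
  have hmod (i j) : u i ⬝ᵥ gramD4 *ᵥ u j ≡ gramD4 i j [ZMOD 4] := by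
    rw [← single_dotProduct_gramD4_mulVec_single]
    exact (linkR_eq_linkR_iff hn Amat_four_mul_gramD4).1 (hlink _ _ _ _ (hu i) (hu j))
  exact exists_isometry_of_gram_eq (φ := φ.toAddMonoidHom) hn Amat_four_mul_gramD4 hu
    (gramD4_eq_of_modEq hroot hmod)
end
end

section
/- For h = 6, the image of the boundary map ∂ is a subgroup of index 2 in the group of all group automorphisms φ of ℤ⁶/A₆ℤ⁶ satisfying ∂λ(φ(ξ),φ(η)) = ∂λ(ξ,η) and ∂θ(φ(ξ)) = ∂θ(ξ) for all ξ, η; in particular ∂ is not surjective, so there exists an automorphism of the boundary forms that is not of the form [x] ↦ [(P^T)^{-1}x] for any P ∈ GL₆(ℤ) with P^T A₆ P = A₆. -/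
open Matrix

noncomputable section

/-- φ preserves the boundary linking form ∂λ and the boundary quadratic form ∂θ
(stated on integer representatives). -/
def PreservesBoundaryForms (h : ℕ) (φ : Coker h ≃+ Coker h) : Prop :=
  (∀ x y x' y' : Fin h → ℤ, ckMk x' = φ (ckMk x) → ckMk y' = φ (ckMk y) →
    linkR h x' y' = linkR h x y) ∧
  (∀ x x' : Fin h → ℤ, ckMk x' = φ (ckMk x) → quadR h x' = quadR h x)

/-- φ lies in the image of the boundary map ∂, i.e. φ([x]) = [(Pᵀ)⁻¹ x] for some isometry
P ∈ GL_h(ℤ) of A_h. -/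
def InBoundaryImage (h : ℕ) (φ : Coker h ≃+ Coker h) : Prop :=
  ∃ P : Matrix (Fin h) (Fin h) ℤ, IsUnit P.det ∧ Pᵀ * Amat h * P = Amat h ∧
    ∀ x : Fin h → ℤ, φ (ckMk x) = ckMk ((Pᵀ)⁻¹ *ᵥ x)

/-! `A_h` is twice the Gram matrix of the lattice `D_h` of integer vectors with even coordinate sum,
so `ℤ^h / A_h ℤ^h` is the group of integer vectors whose coordinates all have the same parity,
modulo `4 D_h`, with `∂λ(x, y) = x · y / 8` and `∂θ(x) = x · x / 16`. The image of `∂` comes from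
the isometries of `D_h`. For `4 ∤ h` an automorphism of the forms sends each class `[2 eᵢ]` to
some `[2 zᵢ]`, and it comes from a signed permutation of the coordinates once every `zᵢ` has
exactly one odd coordinate. The supports of the `zᵢ` modulo `2` have cardinality `1` modulo `4` and
even pairwise intersections; in six coordinates this forces either all of them or all of their
complements to be singletons. The reflection in `(1, …, 1)`, which is defined on the quotient but
not on `D_h`, exchanges the two cases. -/

namespace BoundaryForms

open Finset

section GramMatrix

variable {n : Type*} [Fintype n] [DecidableEq n] {R : Type*} [CommRing R]

lemma two_mul_dotProduct_inv_mul_mul_inv_mulVec (Q : Matrix n n R) (hQ : IsUnit (Q + Qᵀ).det)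
    (x : n → R) :
    2 * (x ⬝ᵥ (((Q + Qᵀ)⁻¹ * Q * (Q + Qᵀ)⁻¹) *ᵥ x)) = x ⬝ᵥ ((Q + Qᵀ)⁻¹ *ᵥ x) := by
  set A := Q + Qᵀ with hA
  set y := A⁻¹ *ᵥ x with hy
  have hsymm : (A⁻¹)ᵀ = A⁻¹ := by
    rw [transpose_nonsing_inv, hA, transpose_add, transpose_transpose, add_comm]
  have hxy : A *ᵥ y = x := by rw [hy, mulVec_mulVec, mul_nonsing_inv _ hQ, one_mulVec]
  have hxA : x ᵥ* A⁻¹ = y := by rw [← hsymm, vecMul_transpose]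
  have hform : x ⬝ᵥ ((A⁻¹ * Q * A⁻¹) *ᵥ x) = y ⬝ᵥ (Q *ᵥ y) := by
    rw [← mulVec_mulVec, ← hy, ← mulVec_mulVec, dotProduct_mulVec x, hxA]
  have htranspose : y ⬝ᵥ (Qᵀ *ᵥ y) = y ⬝ᵥ (Q *ᵥ y) := by
    rw [mulVec_transpose, dotProduct_comm, ← dotProduct_mulVec]
  calc 2 * (x ⬝ᵥ ((A⁻¹ * Q * A⁻¹) *ᵥ x)) = y ⬝ᵥ (Q *ᵥ y) + y ⬝ᵥ (Qᵀ *ᵥ y) := by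
        rw [hform, htranspose, two_mul]
    _ = x ⬝ᵥ y := by rw [← dotProduct_add, ← add_mulVec, ← hA, hxy, dotProduct_comm]

lemma det_ne_zero_of_mul_eq_smul_one [IsDomain R] {A S : Matrix n n R} {c : R} (hc : c ≠ 0)
    (hAS : A * S = c • 1) : S.det ≠ 0 := by
  have hdet : A.det * S.det = c ^ Fintype.card n := by
    simpa only [det_mul, det_smul, det_one, mul_one] using congrArg det hAS
  exact right_ne_zero_of_mul (hdet ▸ pow_ne_zero _ hc)

lemma isUnit_det_of_transpose_mul_mul_eq [IsDomain R] {S F : Matrix n n R} (hS : S.det ≠ 0)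
    (hF : Fᵀ * S * F = S) : IsUnit F.det := by
  have hdet : F.det * F.det * S.det = 1 * S.det := by
    simpa only [det_mul, det_transpose, one_mul, mul_right_comm] using congrArg det hF
  exact IsUnit.of_mul_eq_one _ (mul_right_cancel₀ hS hdet)

lemma mul_mul_transpose_eq_of_transpose_mul_mul_eq [IsDomain R] {A S F : Matrix n n R} {c : R}
    (hc : c ≠ 0) (hAS : A * S = c • 1) (hSA : S * A = c • 1) (hF : Fᵀ * S * F = S) :
    F * A * Fᵀ = A := by
  have hFt : IsUnit Fᵀ.det := by
    rw [det_transpose]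
    exact isUnit_det_of_transpose_mul_mul_eq (det_ne_zero_of_mul_eq_smul_one hc hAS) hF
  have hcancel : Fᵀ * (S * (F * A * Fᵀ)) = Fᵀ * (c • 1) := by
    calc Fᵀ * (S * (F * A * Fᵀ)) = Fᵀ * S * F * A * Fᵀ := by simp only [mul_assoc]
      _ = Fᵀ * (c • 1) := by rw [hF, hSA, smul_one_mul, mul_smul_one]
  have hSFAF : S * (F * A * Fᵀ) = c • 1 := by
    simpa only [nonsing_inv_mul_cancel_left _ _ hFt] using congrArg (Fᵀ⁻¹ * ·) hcancel
  have hsmul : c • (F * A * Fᵀ) = c • A := by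
    rw [← smul_one_mul, ← hAS, mul_assoc, hSFAF, mul_smul_one]
  exact smul_right_injective _ hc hsmul

lemma inv_mul_mul_transpose_inv_eq {A F : Matrix n n R} (hdet : IsUnit F.det)
    (hF : F * A * Fᵀ = A) : F⁻¹ * A * F⁻¹ᵀ = A := by
  have hFt : IsUnit Fᵀ.det := by rwa [det_transpose]
  calc F⁻¹ * A * F⁻¹ᵀ = F⁻¹ * (F * A * Fᵀ) * Fᵀ⁻¹ := by rw [hF, transpose_nonsing_inv]
    _ = A := by
        rw [mul_assoc F, nonsing_inv_mul_cancel_left _ _ hdet, mul_nonsing_inv_cancel_right _ _ hFt]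

end GramMatrix

lemma coe_div_eq_coe_div_iff {n : ℤ} (hn : n ≠ 0) {p q : ℤ} :
    ((p / n : ℚ) : AddCircle (1 : ℚ)) = ((q / n : ℚ) : AddCircle (1 : ℚ)) ↔ p ≡ q [ZMOD n] := by
  have hn' : (n : ℚ) ≠ 0 := mod_cast hn
  rw [eq_comm, ← sub_eq_zero, ← AddCircle.coe_sub, AddCircle.coe_eq_zero_iff, Int.modEq_iff_dvd]
  refine exists_congr fun k ↦ ?_
  rw [← @Int.cast_inj ℚ, zsmul_one, ← sub_div, eq_div_iff hn', eq_comm, mul_comm]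
  push_cast
  rfl

section Coordinates

variable (h : ℕ) [NeZero h]

/-- The matrix of a basis of the lattice `D_h` of integer vectors with even coordinate sum, in
which `A_h` is twice the Gram matrix: its columns are `2 e₀` and `e₀ + eⱼ` for `j ≠ 0`. -/
def latticeMatrix : Matrix (Fin h) (Fin h) ℤ := 1 + vecMulVec (Pi.single 0 1) 1

/-- Twice the transposed inverse of `latticeMatrix h`: its columns, halved, are the dual basis of
the dual lattice `D_h*`. -/
def dualMatrix : Matrix (Fin h) (Fin h) ℤ := (2 : ℤ) • 1 - vecMulVec 1 (Pi.single 0 1)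

lemma dualMatrix_mul_transpose : dualMatrix h * (latticeMatrix h)ᵀ = (2 : ℤ) • 1 := by
  simp only [dualMatrix, latticeMatrix, transpose_add, transpose_one, transpose_vecMulVec, mul_add,
    sub_mul, mul_one, vecMulVec_mul_vecMulVec, single_dotProduct, smul_mul_assoc, one_mul,
    Pi.one_apply, one_smul]
  module

lemma transpose_mul_dualMatrix : (latticeMatrix h)ᵀ * dualMatrix h = (2 : ℤ) • 1 := by
  simp only [dualMatrix, latticeMatrix, transpose_add, transpose_one, transpose_vecMulVec, mul_sub,
    add_mul, mul_one, vecMulVec_mul_vecMulVec, single_dotProduct, mul_smul_comm, one_mul,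
    Pi.one_apply, one_smul]
  module

lemma transpose_latticeMatrix_mul : (latticeMatrix h)ᵀ * latticeMatrix h =
    1 + vecMulVec (Pi.single 0 1) 1 + vecMulVec 1 (Pi.single 0 1) + vecMulVec 1 1 := by
  simp only [latticeMatrix, transpose_add, transpose_one, transpose_vecMulVec, mul_add, add_mul,
    mul_one, vecMulVec_mul_vecMulVec, single_dotProduct, one_mul, Pi.single_eq_same, one_smul]
  module

lemma Amat_eq : Amat h = (2 : ℤ) • ((latticeMatrix h)ᵀ * latticeMatrix h) := by
  rw [transpose_latticeMatrix_mul]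
  ext i j
  simp only [Amat, Qmat, Matrix.add_apply, Matrix.transpose_apply, Matrix.of_apply,
    Matrix.smul_apply, one_apply, vecMulVec_apply, Pi.single_apply, Fin.val_eq_zero_iff]
  rcases eq_or_ne i 0 with rfl | hi
  · rcases eq_or_ne j 0 with rfl | hj
    · simp
    · simp [hj, hj.symm]
  · rcases eq_or_ne j 0 with rfl | hj
    · simp [hi]
    · rcases lt_trichotomy i j with hij | rfl | hij
      · simp [hi, hj, hij.ne, hij.le, hij.not_ge]
      · simp [hi]
      · simp [hi, hj, hij.ne', hij.le, hij.not_ge]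

lemma Amat_mul_dualMatrix : Amat h * ((dualMatrix h)ᵀ * dualMatrix h) = (8 : ℤ) • 1 := by
  have hCT : latticeMatrix h * (dualMatrix h)ᵀ = (2 : ℤ) • 1 := by
    simpa using congrArg transpose (dualMatrix_mul_transpose h)
  calc Amat h * ((dualMatrix h)ᵀ * dualMatrix h)
      = (2 : ℤ) • ((latticeMatrix h)ᵀ * (latticeMatrix h * (dualMatrix h)ᵀ) * dualMatrix h) := by
        rw [Amat_eq, smul_mul]
        simp only [mul_assoc]
    _ = (8 : ℤ) • 1 := by
        rw [hCT, mul_smul_one, smul_mul, transpose_mul_dualMatrix, smul_smul, smul_smul]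
        rfl

lemma dualMatrix_mul_Amat : (dualMatrix h)ᵀ * dualMatrix h * Amat h = (8 : ℤ) • 1 := by
  have hsymm : (Amat h)ᵀ = Amat h := by
    rw [Amat, transpose_add, transpose_transpose, add_comm]
  simpa [hsymm] using congrArg transpose (Amat_mul_dualMatrix h)

lemma AmatQ_mul_dualMatrix :
    AmatQ h * ((1 / 8 : ℚ) • ((dualMatrix h)ᵀ * dualMatrix h).map Int.cast) = 1 := by
  have hmap := congrArg (Int.castRingHom ℚ).mapMatrix (Amat_mul_dualMatrix h)
  rw [map_mul, map_zsmul, map_one] at hmap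
  have : AmatQ h * ((dualMatrix h)ᵀ * dualMatrix h).map Int.cast = (8 : ℤ) • 1 := hmap
  rw [mul_smul_comm, this, ← Int.cast_smul_eq_zsmul ℚ, smul_smul]
  norm_num

variable {h}

/-- The coordinates of `x ∈ ℤ^h` in `2 D_h*`, the lattice of integer vectors whose entries all have
the same parity. They turn `8 ∂λ` into the standard scalar product and `A_h ℤ^h` into `4 D_h`. -/
def coord : (Fin h → ℤ) →ₗ[ℤ] (Fin h → ℤ) := (dualMatrix h).mulVecLin

lemma coord_apply (x : Fin h → ℤ) (i : Fin h) : coord x i = 2 * x i - x 0 := by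
  simp only [coord, dualMatrix, mulVecLin_apply, sub_mulVec, smul_mulVec, one_mulVec,
    vecMulVec_mulVec, Pi.sub_apply, Pi.smul_apply, single_one_dotProduct, Pi.one_apply]
  simp

lemma coord_injective : Function.Injective (coord (h := h)) := by
  intro x y hxy
  have hcoord (i : Fin h) : 2 * x i - x 0 = 2 * y i - y 0 := by
    simpa only [coord_apply] using congrFun hxy i
  funext i
  linarith [hcoord i, hcoord 0]

lemma coord_Amat_mulVec (v : Fin h → ℤ) :
    coord (Amat h *ᵥ v) = (4 : ℤ) • (v + Pi.single 0 (∑ i, v i)) := by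
  rw [coord, mulVecLin_apply, mulVec_mulVec, Amat_eq, mul_smul_comm, ← mul_assoc,
    dualMatrix_mul_transpose, smul_mul, one_mul, smul_smul, latticeMatrix, smul_mulVec, add_mulVec,
    one_mulVec, vecMulVec_mulVec, one_dotProduct]
  congr 2
  ext i
  simp [Pi.single_apply]

lemma coord_dotProduct_coord (x y : Fin h → ℤ) :
    coord x ⬝ᵥ coord y = x ⬝ᵥ (((dualMatrix h)ᵀ * dualMatrix h) *ᵥ y) := by
  rw [← mulVec_mulVec, dotProduct_mulVec, vecMul_transpose]
  rfl

lemma dotProduct_inv_AmatQ_mulVec (x y : Fin h → ℤ) :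
    ratVec x ⬝ᵥ ((AmatQ h)⁻¹ *ᵥ ratVec y) = (coord x ⬝ᵥ coord y : ℤ) / (8 : ℤ) := by
  set S := (dualMatrix h)ᵀ * dualMatrix h
  have hSy : S.map (Int.cast : ℤ → ℚ) *ᵥ ratVec y = ratVec (S *ᵥ y) := by
    funext i
    exact ((Int.castRingHom ℚ).map_mulVec S y i).symm
  have hdot : ratVec x ⬝ᵥ ratVec (S *ᵥ y) = (x ⬝ᵥ (S *ᵥ y) : ℤ) :=
    ((Int.castRingHom ℚ).map_dotProduct x (S *ᵥ y)).symm
  rw [inv_eq_right_inv (AmatQ_mul_dualMatrix h), smul_mulVec, hSy, dotProduct_smul, hdot,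
    ← coord_dotProduct_coord, smul_eq_mul, one_div_mul_eq_div]
  norm_num

lemma linkR_eq (x y : Fin h → ℤ) :
    linkR h x y = (((coord x ⬝ᵥ coord y : ℤ) / (8 : ℤ) : ℚ) : AddCircle (1 : ℚ)) := by
  rw [linkR, dotProduct_inv_AmatQ_mulVec]

lemma quadR_eq (x : Fin h → ℤ) :
    quadR h x = (((coord x ⬝ᵥ coord x : ℤ) / (16 : ℤ) : ℚ) : AddCircle (1 : ℚ)) := by
  have hA : AmatQ h = QmatQ h + (QmatQ h)ᵀ := by
    ext i j
    simp [AmatQ, Amat, QmatQ]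
  have hdet : IsUnit (QmatQ h + (QmatQ h)ᵀ).det := by
    rw [← hA]
    exact isUnit_det_of_right_inverse (AmatQ_mul_dualMatrix h)
  have htwo := two_mul_dotProduct_inv_mul_mul_inv_mulVec (QmatQ h) hdet (ratVec x)
  rw [← hA, dotProduct_inv_AmatQ_mulVec] at htwo
  rw [quadR]
  congr 1
  push_cast at htwo ⊢
  linarith

lemma linkR_eq_linkR_iff {x y x' y' : Fin h → ℤ} :
    linkR h x y = linkR h x' y' ↔ coord x ⬝ᵥ coord y ≡ coord x' ⬝ᵥ coord y' [ZMOD 8] := by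
  rw [linkR_eq, linkR_eq, coe_div_eq_coe_div_iff (by decide)]

lemma quadR_eq_quadR_iff {x y : Fin h → ℤ} :
    quadR h x = quadR h y ↔ coord x ⬝ᵥ coord x ≡ coord y ⬝ᵥ coord y [ZMOD 16] := by
  rw [quadR_eq, quadR_eq, coe_div_eq_coe_div_iff (by decide)]

lemma linkR_eq_quadR_add_sub_sub (x y : Fin h → ℤ) :
    linkR h x y = quadR h (x + y) - quadR h x - quadR h y := by
  rw [linkR_eq, quadR_eq, quadR_eq, quadR_eq, ← AddCircle.coe_sub, ← AddCircle.coe_sub, map_add,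
    add_dotProduct, dotProduct_add, dotProduct_add, dotProduct_comm (coord y)]
  congr 1
  push_cast
  ring

lemma transpose_mul_mul_eq_iff {F : Matrix (Fin h) (Fin h) ℤ} :
    Fᵀ * ((dualMatrix h)ᵀ * dualMatrix h) * F = (dualMatrix h)ᵀ * dualMatrix h ↔
      ∀ x y, coord (F *ᵥ x) ⬝ᵥ coord (F *ᵥ y) = coord x ⬝ᵥ coord y := by
  set S := (dualMatrix h)ᵀ * dualMatrix h
  have hpull (x y) : coord (F *ᵥ x) ⬝ᵥ coord (F *ᵥ y) = x ⬝ᵥ ((Fᵀ * S * F) *ᵥ y) := by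
    rw [coord_dotProduct_coord, ← vecMul_transpose F x, ← dotProduct_mulVec, mulVec_mulVec,
      mulVec_mulVec, ← mul_assoc]
  simp only [hpull, coord_dotProduct_coord]
  refine ⟨fun hF x y ↦ by rw [hF], fun hF ↦ mulVec_injective ?_⟩
  funext y
  exact dotProduct_eq _ _ fun x ↦ by rw [dotProduct_comm, hF, dotProduct_comm]

lemma ckMk_eq_ckMk_iff {x y : Fin h → ℤ} :
    ckMk x = ckMk y ↔ ∃ m : Fin h → ℤ, coord x = coord y + (4 : ℤ) • m ∧ Even (∑ i, m i) := by
  have hrange : ckMk x = ckMk y ↔ ∃ v, Amat h *ᵥ v = x - y := Submodule.Quotient.eq _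
  rw [hrange]
  constructor
  · rintro ⟨v, hv⟩
    refine ⟨v + Pi.single 0 (∑ i, v i), ?_, ∑ i, v i, ?_⟩
    · rw [← coord_Amat_mulVec, hv, map_sub, add_sub_cancel]
    · simp [sum_add_distrib]
  · rintro ⟨m, hm, s, hs⟩
    refine ⟨m - Pi.single 0 s, coord_injective ?_⟩
    have hsum : ∑ i, (m - Pi.single 0 s : Fin h → ℤ) i = s := by simp [hs]
    rw [coord_Amat_mulVec, hsum, sub_add_cancel, map_sub, hm, add_sub_cancel_left]

lemma odd_coord_iff (x : Fin h → ℤ) (i : Fin h) : Odd (coord x i) ↔ Odd (x 0) := by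
  rw [coord_apply, Int.odd_sub', iff_true_right (even_two_mul _)]

lemma exists_coord_eq {z : Fin h → ℤ} (hz : ∀ i, Odd (z i) ↔ Odd (z 0)) : ∃ x, coord x = z := by
  choose k hk using fun i ↦ Int.even_sub'.2 (hz i).symm
  refine ⟨fun i ↦ z 0 - k i, ?_⟩
  funext i
  rw [coord_apply]
  linarith [hk i, hk 0]

lemma even_coord_dotProduct_iff (x m : Fin h → ℤ) :
    Even (coord x ⬝ᵥ m) ↔ Even (x 0 * ∑ i, m i) := by
  have hcoord : coord x = (2 : ℤ) • x - x 0 • 1 := by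
    funext i
    simp [coord_apply]
  rw [hcoord, sub_dotProduct, smul_dotProduct, smul_dotProduct, one_dotProduct, smul_eq_mul,
    smul_eq_mul, Int.even_sub, iff_true_left (even_two_mul _)]

lemma quadR_congr {x y : Fin h → ℤ} (hxy : ckMk x = ckMk y) : quadR h x = quadR h y := by
  obtain ⟨m, hm, hsum⟩ := ckMk_eq_ckMk_iff.1 hxy
  obtain ⟨k, hk⟩ := (even_coord_dotProduct_iff y m).2 (hsum.mul_left _)
  rw [quadR_eq_quadR_iff, Int.modEq_iff_dvd, hm]
  refine ⟨-(k + m ⬝ᵥ m), ?_⟩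
  simp only [add_dotProduct, dotProduct_add, smul_dotProduct, dotProduct_smul, dotProduct_comm m,
    hk, smul_eq_mul]
  ring

end Coordinates

section Groups

variable {h : ℕ} [NeZero h]

lemma preservesBoundaryForms_of_quadR {φ : Coker h ≃+ Coker h}
    (hφ : ∀ x x' : Fin h → ℤ, ckMk x' = φ (ckMk x) → quadR h x' = quadR h x) :
    PreservesBoundaryForms h φ := by
  refine ⟨fun x y x' y' hx hy ↦ ?_, hφ⟩
  have hadd : ckMk (x' + y') = φ (ckMk (x + y)) := by
    change ckMk x' + ckMk y' = φ (ckMk x + ckMk y)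
    rw [map_add, hx, hy]
  rw [linkR_eq_quadR_add_sub_sub, hφ _ _ hadd, hφ _ _ hx, hφ _ _ hy, ← linkR_eq_quadR_add_sub_sub]

lemma preservesBoundaryForms_of_lift {φ : Coker h ≃+ Coker h} {f : (Fin h → ℤ) → Fin h → ℤ}
    (hφ : ∀ x, φ (ckMk x) = ckMk (f x)) (hf : ∀ x, quadR h (f x) = quadR h x) :
    PreservesBoundaryForms h φ :=
  preservesBoundaryForms_of_quadR fun x _ hx ↦ (quadR_congr (hx.trans (hφ x))).trans (hf x)

variable (h) in
/-- The automorphism group of the boundary forms `(∂λ, ∂θ)`. Mathlib writes the composition of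
`AddAut` additively, so `φ + ψ` is `φ ∘ ψ`. -/
def boundaryFormAut : AddSubgroup (AddAut (Coker h)) where
  carrier := {φ | PreservesBoundaryForms h φ}
  zero_mem' := preservesBoundaryForms_of_lift (f := id) (fun _ ↦ rfl) fun _ ↦ rfl
  add_mem' {φ ψ} hφ hψ := by
    refine preservesBoundaryForms_of_quadR fun x x' hx ↦ ?_
    obtain ⟨y, hy⟩ := Submodule.Quotient.mk_surjective _ (ψ (ckMk x))
    exact (hφ.2 y x' (hx.trans (congrArg φ hy.symm))).trans (hψ.2 x y hy)
  neg_mem' {φ} hφ := preservesBoundaryForms_of_quadR fun x x' hx ↦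
    (hφ.2 x' x (by rw [hx]; exact (φ.apply_symm_apply _).symm)).symm

variable (h) in
/-- The image of the boundary map `∂`, as a subgroup of the automorphisms of `ℤ^h / A_h ℤ^h`. -/
def boundaryImage : AddSubgroup (AddAut (Coker h)) where
  carrier := {φ | InBoundaryImage h φ}
  zero_mem' := ⟨1, by simp, by simp, fun x ↦ by simp⟩
  add_mem' := by
    rintro φ ψ ⟨P, hP, hPA, hφ⟩ ⟨R, hR, hRA, hψ⟩
    refine ⟨P * R, ?_, ?_, fun x ↦ ?_⟩
    · rw [det_mul]
      exact hP.mul hR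
    · calc (P * R)ᵀ * Amat h * (P * R) = Rᵀ * (Pᵀ * Amat h * P) * R := by
            rw [transpose_mul]
            simp only [mul_assoc]
        _ = Amat h := by rw [hPA, hRA]
    · rw [AddAut.add_apply, hψ, hφ, mulVec_mulVec, transpose_mul, Matrix.mul_inv_rev]
  neg_mem' := by
    rintro φ ⟨P, hP, hPA, hφ⟩
    have hPt : IsUnit Pᵀ.det := by rwa [det_transpose]
    have hinv : P⁻¹ᵀ * Amat h * P⁻¹ = Amat h := by
      simpa [transpose_nonsing_inv] using inv_mul_mul_transpose_inv_eq hPt hPA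
    refine ⟨P⁻¹, isUnit_nonsing_inv_det _ hP, hinv, fun x ↦ ?_⟩
    rw [transpose_nonsing_inv, nonsing_inv_nonsing_inv _ hPt, AddAut.neg_apply,
      AddEquiv.symm_apply_eq, hφ, mulVec_mulVec, nonsing_inv_mul _ hPt, one_mulVec]

lemma mem_boundaryImage_iff {φ : AddAut (Coker h)} :
    φ ∈ boundaryImage h ↔ ∃ f : (Fin h → ℤ) →ₗ[ℤ] (Fin h → ℤ),
      (∀ x y, coord (f x) ⬝ᵥ coord (f y) = coord x ⬝ᵥ coord y) ∧
        ∀ x, φ (ckMk x) = ckMk (f x) := by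
  have hAS := Amat_mul_dualMatrix h
  have hSA := dualMatrix_mul_Amat h
  constructor
  · rintro ⟨P, hP, hPA, hφ⟩
    refine ⟨(Pᵀ)⁻¹.mulVecLin, transpose_mul_mul_eq_iff.1 ?_, hφ⟩
    have hPS := mul_mul_transpose_eq_of_transpose_mul_mul_eq (by decide) hSA hAS hPA
    simpa [transpose_nonsing_inv] using inv_mul_mul_transpose_inv_eq hP hPS
  · rintro ⟨f, hf, hφ⟩
    obtain ⟨F, rfl⟩ : ∃ F : Matrix (Fin h) (Fin h) ℤ, F.mulVecLin = f :=
      ⟨LinearMap.toMatrix' f, Matrix.toLin'_toMatrix' f⟩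
    have hFS := transpose_mul_mul_eq_iff.2 hf
    have hFA := mul_mul_transpose_eq_of_transpose_mul_mul_eq (by decide) hAS hSA hFS
    have hF : IsUnit F.det := isUnit_det_of_transpose_mul_mul_eq
      (det_ne_zero_of_mul_eq_smul_one (by decide) hAS) hFS
    refine ⟨F⁻¹ᵀ, ?_, ?_, fun x ↦ ?_⟩
    · rw [det_transpose]
      exact isUnit_nonsing_inv_det _ hF
    · rw [transpose_transpose]
      exact inv_mul_mul_transpose_inv_eq hF hFA
    · rw [transpose_transpose, nonsing_inv_nonsing_inv _ hF, hφ, mulVecLin_apply]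

end Groups

section OddSupport

variable {ι : Type*} [Fintype ι]

/-- The coordinates at which an integer vector is odd, i.e. the support of its reduction
modulo `2`. -/
def oddSupport (z : ι → ℤ) : Finset ι := {k | Odd (z k)}

lemma mem_oddSupport {z : ι → ℤ} {k : ι} : k ∈ oddSupport z ↔ Odd (z k) := by simp [oddSupport]

lemma sum_modEq_card_oddSupport (z : ι → ℤ) : ∑ k, z k ≡ #(oddSupport z) [ZMOD 2] := by
  rw [oddSupport, card_filter, Nat.cast_sum]
  refine Int.ModEq.sum fun k _ ↦ ?_
  split_ifs with hk
  · exact Int.odd_iff.1 hk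
  · exact Int.even_iff.1 (Int.not_odd_iff_even.1 hk)

lemma dotProduct_modEq_card_inter_oddSupport [DecidableEq ι] (z w : ι → ℤ) :
    z ⬝ᵥ w ≡ #(oddSupport z ∩ oddSupport w) [ZMOD 2] := by
  have hinter : oddSupport z ∩ oddSupport w = oddSupport (z * w) := by
    ext k
    simp only [mem_inter, mem_oddSupport, Pi.mul_apply, Int.odd_mul]
  rw [hinter]
  exact sum_modEq_card_oddSupport (z * w)

lemma dotProduct_self_modEq_card_oddSupport (z : ι → ℤ) :
    z ⬝ᵥ z ≡ #(oddSupport z) [ZMOD 4] := by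
  rw [oddSupport, card_filter, Nat.cast_sum]
  refine Int.ModEq.sum fun k _ ↦ ?_
  rw [← pow_two]
  split_ifs with hk
  · exact Int.sq_mod_four_eq_one_of_odd hk
  · obtain ⟨a, ha⟩ := Int.not_odd_iff_even.1 hk
    exact Int.modEq_zero_iff_dvd.2 ⟨a ^ 2, by rw [ha]; ring⟩

lemma card_oddSupport_le_dotProduct_self (z : ι → ℤ) : #(oddSupport z) ≤ z ⬝ᵥ z := by
  rw [oddSupport, card_filter, Nat.cast_sum]
  refine sum_le_sum fun k _ ↦ ?_
  split_ifs with hk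
  · have : z k ≠ 0 := fun h0 ↦ by simp [h0] at hk
    exact Int.add_one_le_of_lt (mul_self_pos.2 this)
  · exact mul_self_nonneg (z k)

lemma oddSupport_add_two_smul (z r : ι → ℤ) : oddSupport (z + (2 : ℤ) • r) = oddSupport z := by
  ext k
  simp [mem_oddSupport, parity_simps]

lemma oddSupport_add_smul_one [DecidableEq ι] (z : ι → ℤ) {c : ℤ} (hc : Odd c) :
    oddSupport (z + c • 1) = (oddSupport z)ᶜ := by
  ext k
  simp [mem_oddSupport, Int.odd_add, Int.not_even_iff_odd.2 hc]

lemma oddSupport_add_sum_smul_one [DecidableEq ι] {z : ι → ℤ}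
    (hz : Odd #(oddSupport z)) :
    oddSupport (z + (∑ i, z i) • 1) = (oddSupport z)ᶜ := by
  have hcard : (#(oddSupport z) : ℤ) ≡ 1 [ZMOD 2] := Int.odd_iff.1 (mod_cast hz)
  exact oddSupport_add_smul_one z (Int.odd_iff.2 ((sum_modEq_card_oddSupport z).trans hcard))

lemma oddSupport_single [DecidableEq ι] (a : ι) : oddSupport (Pi.single a 1 : ι → ℤ) = {a} := by
  ext k
  simp [mem_oddSupport, Pi.single_apply, apply_ite Odd]

lemma exists_eq_single_add_two_smul [DecidableEq ι] {z : ι → ℤ} {a : ι}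
    (hz : oddSupport z = {a}) :
    ∃ (ε : ℤˣ) (r : ι → ℤ), z = Pi.single a (ε : ℤ) + (2 : ℤ) • r ∧ Even (∑ k, r k) := by
  have heven (k : ι) : Even (z k - (Pi.single a 1 : ι → ℤ) k) := by
    have hk : Odd (z k) ↔ Odd ((Pi.single a 1 : ι → ℤ) k) := by
      rw [← mem_oddSupport, ← mem_oddSupport, hz, oddSupport_single]
    rw [Int.even_sub, ← not_iff_not, Int.not_even_iff_odd, Int.not_even_iff_odd, hk]
  choose r hr using heven
  have hzr : z = Pi.single a 1 + (2 : ℤ) • r := by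
    funext k
    simp only [Pi.add_apply, Pi.smul_apply, smul_eq_mul]
    linarith [hr k]
  rcases Int.even_or_odd (∑ k, r k) with hsum | hsum
  · exact ⟨1, r, hzr, hsum⟩
  · refine ⟨-1, r + Pi.single a 1, ?_, ?_⟩
    · rw [hzr, Units.val_neg, Units.val_one, Pi.single_neg]
      module
    · simpa [sum_add_distrib] using hsum.add_odd odd_one

end OddSupport

section Classes

variable {h : ℕ} [NeZero h]

lemma dotProduct_self_coord_modEq_of_odd {x : Fin h → ℤ} (hx : Odd (x 0)) :
    coord x ⬝ᵥ coord x ≡ h [ZMOD 4] := by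
  have hodd : oddSupport (coord x) = univ :=
    eq_univ_of_forall fun i ↦ mem_oddSupport.2 ((odd_coord_iff x i).2 hx)
  simpa only [hodd, card_univ, Fintype.card_fin] using
    dotProduct_self_modEq_card_oddSupport (coord x)

lemma ckMk_eq_ckMk_of_odd {x y : Fin h → ℤ} (hx : Odd (x 0))
    (hmod : ∀ i, coord y i ≡ coord x i [ZMOD 4]) (hquad : quadR h y = quadR h x) :
    ckMk y = ckMk x := by
  choose m hm using fun i ↦ Int.modEq_iff_dvd.1 (hmod i).symm
  have hyx : coord y = coord x + (4 : ℤ) • m := by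
    funext i
    simp only [Pi.add_apply, Pi.smul_apply, smul_eq_mul, ← hm i, add_sub_cancel]
  refine ckMk_eq_ckMk_iff.2 ⟨m, hyx, ?_⟩
  have heven : Even (coord x ⬝ᵥ m) := by
    obtain ⟨k, hk⟩ := Int.modEq_iff_dvd.1 (quadR_eq_quadR_iff.1 hquad.symm)
    rw [hyx] at hk
    simp only [add_dotProduct, dotProduct_add, smul_dotProduct, dotProduct_smul,
      dotProduct_comm m, smul_eq_mul] at hk
    exact ⟨k - m ⬝ᵥ m, by linarith⟩
  rw [even_coord_dotProduct_iff, Int.even_mul] at heven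
  exact heven.resolve_left (Int.not_even_iff_odd.2 hx)

/-- The vector with coordinates `2 z`. On these vectors `∂λ` is half the standard scalar product
modulo `1`, and `∂θ` a quarter of the standard norm. -/
def evenVec : (Fin h → ℤ) →ₗ[ℤ] (Fin h → ℤ) :=
  LinearMap.id + (LinearMap.proj 0).smulRight 1

lemma coord_evenVec (z : Fin h → ℤ) : coord (evenVec z) = (2 : ℤ) • z := by
  funext i
  simp only [coord_apply, evenVec, LinearMap.add_apply, LinearMap.id_apply,
    LinearMap.smulRight_apply, LinearMap.proj_apply, Pi.add_apply, Pi.smul_apply, Pi.one_apply,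
    smul_eq_mul]
  ring

lemma exists_evenVec_eq_of_even {x : Fin h → ℤ} (hx : Even (x 0)) : ∃ z, evenVec z = x := by
  obtain ⟨a, ha⟩ := hx
  refine ⟨x - a • 1, ?_⟩
  funext i
  simp [evenVec, ha]

lemma ckMk_eq_ckMk_evenVec_iff {x z : Fin h → ℤ} :
    ckMk x = ckMk (evenVec z) ↔
      ∃ r : Fin h → ℤ, x = evenVec (z + (2 : ℤ) • r) ∧ Even (∑ i, r i) := by
  rw [ckMk_eq_ckMk_iff]
  refine exists_congr fun r ↦ and_congr_left fun _ ↦ ?_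
  rw [← coord_injective.eq_iff (a := x), coord_evenVec, coord_evenVec, smul_add, smul_smul]
  rfl

lemma linkR_evenVec_right_eq_iff {x y w w' : Fin h → ℤ} :
    linkR h x (evenVec w) = linkR h y (evenVec w') ↔
      coord x ⬝ᵥ w ≡ coord y ⬝ᵥ w' [ZMOD 4] := by
  simp only [linkR_eq_linkR_iff, coord_evenVec, dotProduct_smul]
  exact Int.ModEq.mul_left_cancel_iff' (m := 4) (c := 2) (by norm_num)

lemma linkR_evenVec_eq_iff {z w z' w' : Fin h → ℤ} :
    linkR h (evenVec z) (evenVec w) = linkR h (evenVec z') (evenVec w') ↔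
      z ⬝ᵥ w ≡ z' ⬝ᵥ w' [ZMOD 2] := by
  simp only [linkR_evenVec_right_eq_iff, coord_evenVec, smul_dotProduct]
  exact Int.ModEq.mul_left_cancel_iff' (m := 2) (c := 2) (by norm_num)

lemma quadR_evenVec_eq_iff {z w : Fin h → ℤ} :
    quadR h (evenVec z) = quadR h (evenVec w) ↔ z ⬝ᵥ z ≡ w ⬝ᵥ w [ZMOD 4] := by
  simp only [quadR_eq_quadR_iff, coord_evenVec, smul_dotProduct, dotProduct_smul, smul_smul]
  exact Int.ModEq.mul_left_cancel_iff' (m := 4) (c := 4) (by norm_num)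

/-- The `i`-th vector of the frame, with coordinates `2 eᵢ`. -/
def frame (i : Fin h) : Fin h → ℤ := evenVec (Pi.single i 1)

lemma odd_coe_units (ε : ℤˣ) : Odd (ε : ℤ) := by
  rcases Int.units_eq_one_or ε with rfl | rfl <;> decide

lemma exists_isometry_coord_perm (π : Equiv.Perm (Fin h)) (ε : Fin h → ℤˣ) :
    ∃ f : (Fin h → ℤ) →ₗ[ℤ] (Fin h → ℤ),
      (∀ x y, coord (f x) ⬝ᵥ coord (f y) = coord x ⬝ᵥ coord y) ∧
        ∀ x i, coord (f x) (π i) = ε i * coord x i := by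
  let g : (Fin h → ℤ) →ₗ[ℤ] (Fin h → ℤ) :=
    LinearMap.pi fun j ↦ (ε (π.symm j) : ℤ) • (LinearMap.proj (π.symm j) ∘ₗ coord)
  have hodd (x j) : Odd (g x j) ↔ Odd (x 0) := by
    simp [g, Int.odd_mul, odd_coe_units, odd_coord_iff]
  have hg (x : Fin h → ℤ) : g x ∈ LinearMap.range coord :=
    exists_coord_eq fun i ↦ (hodd x i).trans (hodd x 0).symm
  set f := LinearMap.codRestrictOfInjective g coord coord_injective hg
  have hf (x i) : coord (f x) (π i) = ε i * coord x i := by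
    rw [LinearMap.codRestrictOfInjective_comp_apply]
    simp [g]
  refine ⟨f, fun x y ↦ (Equiv.sum_comp π _).symm.trans (sum_congr rfl fun i _ ↦ ?_), hf⟩
  rw [hf, hf]
  linear_combination coord x i * coord y i * Int.units_coe_mul_self (ε i)

lemma mem_boundaryImage_of_frame_perm {φ : AddAut (Coker h)} (hφ : φ ∈ boundaryFormAut h)
    (π : Equiv.Perm (Fin h)) (ε : Fin h → ℤˣ)
    (hframe : ∀ i, φ (ckMk (frame i)) = ckMk (evenVec (Pi.single (π i) (ε i : ℤ)))) :
    φ ∈ boundaryImage h := by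
  obtain ⟨f, hisom, hf⟩ := exists_isometry_coord_perm π ε
  have hodd (x : Fin h → ℤ) (hx : Odd (x 0)) : φ (ckMk x) = ckMk (f x) := by
    obtain ⟨y, hy⟩ : ∃ y, ckMk y = φ (ckMk x) := Submodule.Quotient.mk_surjective _ _
    have hfx : Odd (f x 0) := by
      rw [← odd_coord_iff _ (π 0), hf, Int.odd_mul, odd_coord_iff]
      exact ⟨odd_coe_units _, hx⟩
    rw [← hy]
    refine ckMk_eq_ckMk_of_odd hfx (fun j ↦ ?_) ?_
    · obtain ⟨i, rfl⟩ := π.surjective j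
      have hlink := linkR_evenVec_right_eq_iff.1 (hφ.1 x (frame i) y _ hy (hframe i).symm)
      rw [dotProduct_single, dotProduct_single, mul_one] at hlink
      calc coord y (π i) = coord y (π i) * ε i * ε i := by
            rw [mul_assoc, Int.units_coe_mul_self, mul_one]
        _ ≡ coord x i * ε i [ZMOD 4] := hlink.mul_right _
        _ = coord (f x) (π i) := by rw [hf, mul_comm]
    · rw [hφ.2 x y hy, quadR_eq_quadR_iff, hisom]
  refine mem_boundaryImage_iff.2 ⟨f, hisom, fun x ↦ ?_⟩
  rcases Int.even_or_odd (x 0) with hx | hx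
  · set e : Fin h → ℤ := Pi.single 0 1
    have he : Odd (e 0) := by simp [e]
    calc φ (ckMk x) = φ (ckMk (x + e) - ckMk e) := congrArg φ (add_sub_cancel_right (ckMk x) _).symm
      _ = ckMk (f (x + e)) - ckMk (f e) := by rw [map_sub, hodd _ (hx.add_odd he), hodd _ he]
      _ = ckMk (f x) := by rw [map_add]; exact add_sub_cancel_right (ckMk (f x)) _
  · exact hodd x hx

end Classes

section FrameImage

variable {h : ℕ} [NeZero h] {φ : AddAut (Coker h)}

lemma exists_evenVec_apply_frame (hh : ¬ 4 ∣ h) (hφ : φ ∈ boundaryFormAut h) (i : Fin h) :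
    ∃ z : Fin h → ℤ, φ (ckMk (frame i)) = ckMk (evenVec z) := by
  obtain ⟨y, hy⟩ : ∃ y, ckMk y = φ (ckMk (frame i)) := Submodule.Quotient.mk_surjective _ _
  rcases Int.even_or_odd (y 0) with heven | hodd
  · obtain ⟨z, rfl⟩ := exists_evenVec_eq_of_even heven
    exact ⟨z, hy.symm⟩
  · have hquad : coord y ⬝ᵥ coord y ≡ coord (frame i) ⬝ᵥ coord (frame i) [ZMOD 4] :=
      (quadR_eq_quadR_iff.1 (hφ.2 _ y hy)).of_mul_left 4
    have hzero : (h : ℤ) ≡ 0 [ZMOD 4] := by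
      refine (dotProduct_self_coord_modEq_of_odd hodd).symm.trans (hquad.trans ?_)
      rw [frame, coord_evenVec, smul_dotProduct, dotProduct_smul, smul_smul]
      exact Int.modEq_zero_iff_dvd.2 (dvd_mul_right 4 _)
    exact absurd (Int.natCast_dvd_natCast.1 (Int.modEq_zero_iff_dvd.1 hzero)) hh

variable {z : Fin h → Fin h → ℤ}

lemma card_oddSupport_modEq_one (hφ : φ ∈ boundaryFormAut h)
    (hz : ∀ i, φ (ckMk (frame i)) = ckMk (evenVec (z i))) (i : Fin h) :
    #(oddSupport (z i)) ≡ 1 [MOD 4] := by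
  have hquad := quadR_evenVec_eq_iff.1 (hφ.2 (frame i) _ (hz i).symm)
  rw [single_one_dotProduct, Pi.single_eq_same] at hquad
  exact Int.natCast_modEq_iff.1 ((dotProduct_self_modEq_card_oddSupport (z i)).symm.trans hquad)

lemma even_card_inter_oddSupport (hφ : φ ∈ boundaryFormAut h)
    (hz : ∀ i, φ (ckMk (frame i)) = ckMk (evenVec (z i))) {i j : Fin h} (hij : i ≠ j) :
    Even #(oddSupport (z i) ∩ oddSupport (z j)) := by
  have hlink := linkR_evenVec_eq_iff.1 (hφ.1 (frame i) (frame j) _ _ (hz i).symm (hz j).symm)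
  rw [single_one_dotProduct, Pi.single_eq_of_ne hij] at hlink
  rw [← Int.even_coe_nat, Int.even_iff]
  exact (dotProduct_modEq_card_inter_oddSupport (z i) (z j)).symm.trans hlink

lemma mem_boundaryImage_of_card_oddSupport_eq_one (hφ : φ ∈ boundaryFormAut h)
    (hz : ∀ i, φ (ckMk (frame i)) = ckMk (evenVec (z i)))
    (hcard : ∀ i, #(oddSupport (z i)) = 1) : φ ∈ boundaryImage h := by
  choose π hπ using fun i ↦ card_eq_one.1 (hcard i)
  have hinj : Function.Injective π := by
    intro i j hij
    by_contra hne
    have := even_card_inter_oddSupport hφ hz hne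
    rw [hπ, hπ, hij, inter_self, card_singleton] at this
    exact Nat.not_even_one this
  choose ε r hr hsum using fun i ↦ exists_eq_single_add_two_smul (hπ i)
  refine mem_boundaryImage_of_frame_perm hφ
    (Equiv.ofBijective π (Finite.injective_iff_bijective.1 hinj)) ε fun i ↦ ?_
  rw [hz]
  exact ckMk_eq_ckMk_evenVec_iff.2 ⟨r i, by rw [hr i]; rfl, hsum i⟩

end FrameImage

section SetSystem

variable {ι : Type*} [Fintype ι] [DecidableEq ι]

lemma card_eq_one_or_card_compl_eq_one (hι : Fintype.card ι = 6) {s : Finset ι}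
    (hs : #s ≡ 1 [MOD 4]) : #s = 1 ∨ #sᶜ = 1 := by
  have hcompl := card_add_card_compl s
  unfold Nat.ModEq at hs
  lia

lemma compl_eq_of_even_card_inter {s t : Finset ι} (hs : #sᶜ = 1) (ht : #t = 1)
    (hst : Even #(s ∩ t)) : sᶜ = t := by
  have hlt : #(s ∩ t) < 2 := (card_le_card inter_subset_right).trans_lt (by lia)
  have hdisj : s ∩ t = ∅ := by
    rw [← card_eq_zero]
    obtain ⟨k, hk⟩ := hst
    lia
  refine (eq_of_subset_of_card_le ?_ (hs.trans ht.symm).le).symm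
  exact subset_compl_iff_disjoint_left.2 (disjoint_iff_inter_eq_empty.2 hdisj)

lemma forall_card_eq_one_or_forall_card_compl_eq_one (hι : Fintype.card ι = 6) {S : ι → Finset ι}
    (hS : ∀ i, #(S i) ≡ 1 [MOD 4]) (hinter : ∀ i j, i ≠ j → Even #(S i ∩ S j)) :
    (∀ i, #(S i) = 1) ∨ ∀ i, #(S i)ᶜ = 1 := by
  by_contra! hmixed
  obtain ⟨⟨i, hi⟩, j, hj⟩ := hmixed
  have hi' : #(S i)ᶜ = 1 := (card_eq_one_or_card_compl_eq_one hι (hS i)).resolve_left hi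
  have hj' : #(S j) = 1 := (card_eq_one_or_card_compl_eq_one hι (hS j)).resolve_right hj
  have hne {k l : ι} (hkl : k ≠ l) : S k ≠ S l := by
    intro heq
    have hodd : Odd #(S l) := Nat.odd_iff.2 ((hS l).of_dvd (by decide : 2 ∣ 4))
    have heven := hinter k l hkl
    rw [heq, inter_self] at heven
    exact Nat.not_even_iff_odd.2 hodd heven
  obtain ⟨k, -, hk⟩ : ∃ k ∈ univ, k ∉ ({i, j} : Finset ι) :=
    exists_mem_notMem_of_card_lt_card (card_le_two.trans_lt (by rw [card_univ, hι]; decide))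
  simp only [mem_insert, mem_singleton, not_or] at hk
  have hij : i ≠ j := by
    rintro rfl
    exact hi hj'
  have hcompl : (S i)ᶜ = S j := compl_eq_of_even_card_inter hi' hj' (hinter i j hij)
  rcases card_eq_one_or_card_compl_eq_one hι (hS k) with hk' | hk'
  · have hik := compl_eq_of_even_card_inter hi' hk' (hinter i k (Ne.symm hk.1))
    exact hne hk.2 (hik.symm.trans hcompl)
  · have hkj := compl_eq_of_even_card_inter hk' hj' (hinter k j hk.2)
    exact hne hk.1 (compl_injective (hkj.trans hcompl.symm))

end SetSystem

section GlueReflection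

variable {h : ℕ} [NeZero h]

lemma coord_one : coord (1 : Fin h → ℤ) = 1 := by
  funext i
  simp [coord_apply]

/-- The map `x ↦ x + (x · 1) 1` in coordinates. For `h ≡ 2 [MOD 4]` it is congruent modulo `4` to
the `2`-adic reflection `x ↦ x - (2 / h) (x · 1) 1` in the all-ones vector, since `-2 / h` is odd
and `x · 1` is even. -/
def glueReflection : (Fin h → ℤ) →ₗ[ℤ] (Fin h → ℤ) :=
  LinearMap.id + (∑ i, LinearMap.proj i ∘ₗ coord).smulRight 1

lemma coord_glueReflection (x : Fin h → ℤ) :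
    coord (glueReflection x) = coord x + (∑ i, coord x i) • 1 := by
  rw [← coord_one, ← map_smul, ← map_add]
  simp [glueReflection]

lemma glueReflection_evenVec (z : Fin h → ℤ) :
    glueReflection (evenVec z) = evenVec (z + (∑ i, z i) • 1) := by
  refine coord_injective ?_
  rw [coord_glueReflection, coord_evenVec, coord_evenVec]
  simp only [Pi.smul_apply, ← smul_sum, smul_add, smul_assoc]

lemma range_Amat_le_comap_glueReflection :
    LinearMap.range (Amat h).mulVecLin ≤
      (LinearMap.range (Amat h).mulVecLin).comap glueReflection := by
  intro x hx
  have hmem (v : Fin h → ℤ) : v ∈ LinearMap.range (Amat h).mulVecLin ↔ ckMk v = ckMk 0 :=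
    (Submodule.Quotient.mk_eq_zero _).symm
  obtain ⟨m, hm, hsum⟩ := ckMk_eq_ckMk_iff.1 ((hmem x).1 hx)
  rw [map_zero, zero_add] at hm
  refine (hmem _).2 (ckMk_eq_ckMk_iff.2 ⟨m + (∑ i, m i) • 1, ?_, ?_⟩)
  · rw [coord_glueReflection, hm, map_zero, zero_add]
    simp only [Pi.smul_apply, ← smul_sum, smul_add, smul_assoc]
  · simpa [sum_add_distrib] using hsum.add (hsum.mul_left h)

lemma ckMk_glueReflection_glueReflection (hh : h % 4 = 2) (x : Fin h → ℤ) :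
    ckMk (glueReflection (glueReflection x)) = ckMk x := by
  obtain ⟨k, hk⟩ : ∃ k : ℤ, (h : ℤ) + 2 = 4 * k := ⟨(h + 2) / 4, by lia⟩
  have hheven : Even (h : ℤ) := ⟨2 * k - 1, by linarith⟩
  have hsum : ∑ i, (coord x + (∑ j, coord x j) • 1 : Fin h → ℤ) i =
      (h + 1) * ∑ i, coord x i := by
    simp only [Pi.add_apply, Pi.smul_apply, Pi.one_apply, smul_eq_mul, mul_one, sum_add_distrib,
      sum_const, card_univ, Fintype.card_fin, nsmul_eq_mul]
    ring
  refine ckMk_eq_ckMk_iff.2 ⟨(k * ∑ i, coord x i) • 1, ?_, by simp [hheven]⟩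
  rw [coord_glueReflection, coord_glueReflection, hsum, add_assoc, ← add_smul, smul_smul,
    ← mul_assoc, ← hk]
  ring_nf

/-- The automorphism of `ℤ^h / A_h ℤ^h` induced by the glue reflection. -/
def glueAut (hh : h % 4 = 2) : AddAut (Coker h) :=
  (LinearEquiv.ofInvolutive
    (Submodule.mapQ _ _ glueReflection range_Amat_le_comap_glueReflection)
    (Submodule.Quotient.mk_surjective _ |>.forall.2
      (ckMk_glueReflection_glueReflection hh))).toAddEquiv

lemma glueAut_ckMk (hh : h % 4 = 2) (x : Fin h → ℤ) :
    glueAut hh (ckMk x) = ckMk (glueReflection x) := rfl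

lemma glueAut_mem_boundaryFormAut (hh : h % 4 = 2) : glueAut hh ∈ boundaryFormAut h := by
  refine preservesBoundaryForms_of_lift (glueAut_ckMk hh) fun x ↦ quadR_eq_quadR_iff.2 ?_
  obtain ⟨k, hk⟩ : ∃ k : ℤ, (h : ℤ) + 2 = 4 * k := ⟨(h + 2) / 4, by lia⟩
  obtain ⟨s, hs⟩ : Even (∑ i, coord x i) := by
    rw [← dotProduct_one, even_coord_dotProduct_iff]
    have hheven : Even (h : ℤ) := ⟨2 * k - 1, by linarith⟩
    simp [hheven]
  have hnorm : coord (glueReflection x) ⬝ᵥ coord (glueReflection x) =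
      coord x ⬝ᵥ coord x + (h + 2) * (∑ i, coord x i) ^ 2 := by
    simp only [coord_glueReflection, add_dotProduct, dotProduct_add, smul_dotProduct,
      dotProduct_smul, one_dotProduct, dotProduct_comm _ (1 : Fin h → ℤ), Pi.one_apply, sum_const,
      card_univ, Fintype.card_fin, nsmul_eq_mul, smul_eq_mul]
    ring
  rw [hnorm, hk, hs, Int.modEq_iff_dvd]
  exact ⟨-(k * s ^ 2), by ring⟩

-- An isometry would send the norm one vector `e` to one with `h - 1 > 1` odd coordinates.
lemma glueAut_notMem_boundaryImage (hh : h % 4 = 2) (h2 : 2 < h) :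
    glueAut hh ∉ boundaryImage h := by
  intro hmem
  obtain ⟨f, hisom, hf⟩ := mem_boundaryImage_iff.1 hmem
  set e : Fin h → ℤ := Pi.single 0 1
  have hclass : ckMk (f (frame 0)) = ckMk (evenVec (e + (∑ i, e i) • 1)) := by
    rw [← hf, glueAut_ckMk, frame, glueReflection_evenVec]
  obtain ⟨r, hr, -⟩ := ckMk_eq_ckMk_evenVec_iff.1 hclass
  set y := e + (∑ i, e i) • 1 + (2 : ℤ) • r
  have hcard : #(oddSupport y) = h - 1 := by
    rw [oddSupport_add_two_smul, oddSupport_add_sum_smul_one, oddSupport_single, card_compl,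
      card_singleton, Fintype.card_fin]
    simp [e, oddSupport_single]
  have hnorm : y ⬝ᵥ y = 1 := by
    have hscaled := hisom (frame 0) (frame 0)
    rw [hr, frame] at hscaled
    simp only [coord_evenVec, smul_dotProduct, dotProduct_smul, single_one_dotProduct,
      Pi.single_eq_same, smul_eq_mul] at hscaled
    linarith
  have hle := card_oddSupport_le_dotProduct_self y
  lia

end GlueReflection

lemma mem_boundaryImage_or_glueAut_add_mem {φ : AddAut (Coker 6)} (hφ : φ ∈ boundaryFormAut 6) :
    φ ∈ boundaryImage 6 ∨ glueAut rfl + φ ∈ boundaryImage 6 := by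
  choose z hz using exists_evenVec_apply_frame (by decide) hφ
  have hcard := card_oddSupport_modEq_one hφ hz
  refine (forall_card_eq_one_or_forall_card_compl_eq_one (Fintype.card_fin 6) hcard
    fun i j ↦ even_card_inter_oddSupport hφ hz).imp
    (mem_boundaryImage_of_card_oddSupport_eq_one hφ hz) fun hcompl ↦ ?_
  refine mem_boundaryImage_of_card_oddSupport_eq_one
    (add_mem (glueAut_mem_boundaryFormAut rfl) hφ) (z := fun i ↦ z i + (∑ k, z i k) • 1)
    (fun i ↦ ?_) fun i ↦ ?_
  · rw [AddAut.add_apply, hz, glueAut_ckMk, glueReflection_evenVec]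
  · have hodd : Odd #(oddSupport (z i)) := Nat.odd_iff.2 ((hcard i).of_dvd (by decide : 2 ∣ 4))
    rw [oddSupport_add_sum_smul_one hodd, hcompl]

lemma card_boundaryFormAut (h : ℕ) [NeZero h] :
    Nat.card {φ : Coker h ≃+ Coker h // PreservesBoundaryForms h φ} =
      (boundaryImage h).relIndex (boundaryFormAut h) *
        Nat.card {φ : Coker h ≃+ Coker h // PreservesBoundaryForms h φ ∧ InBoundaryImage h φ} := by
  have hinter := Nat.card_congr
    (Equiv.subtypeSubtypeEquivSubtypeInter (PreservesBoundaryForms h) (InBoundaryImage h))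
  rw [← hinter]
  exact (AddSubgroup.index_mul_card ((boundaryImage h).addSubgroupOf (boundaryFormAut h))).symm

lemma relIndex_boundaryImage_six : (boundaryImage 6).relIndex (boundaryFormAut 6) = 2 :=
  AddSubgroup.relIndex_eq_two_iff_exists_notMem_and'.2
    ⟨glueAut rfl, glueAut_mem_boundaryFormAut rfl, glueAut_notMem_boundaryImage rfl (by decide),
      fun _ hφ ↦ (mem_boundaryImage_or_glueAut_add_mem hφ).symm⟩

end BoundaryForms

/-- For h = 6, the image of the boundary map ∂ has index 2 in the group of all
automorphisms of the boundary forms; in particular ∂ is not surjective. -/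
theorem boundary_map_index_h6 :
    Nat.card {φ : Coker 6 ≃+ Coker 6 // PreservesBoundaryForms 6 φ} =
      2 * Nat.card {φ : Coker 6 ≃+ Coker 6 //
        PreservesBoundaryForms 6 φ ∧ InBoundaryImage 6 φ} ∧
    ∃ φ : Coker 6 ≃+ Coker 6, PreservesBoundaryForms 6 φ ∧ ¬ InBoundaryImage 6 φ := by
  refine ⟨?_, BoundaryForms.glueAut rfl, BoundaryForms.glueAut_mem_boundaryFormAut rfl,
    BoundaryForms.glueAut_notMem_boundaryImage rfl (by decide)⟩
  rw [BoundaryForms.card_boundaryFormAut, BoundaryForms.relIndex_boundaryImage_six]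
end
end
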